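/- Let δ ∈ ℝ and 0 < ρ < 1, and let e^{μ,δ}_{1,ρ}(z) = Σ_{n=0}^∞ z^n/(Γ(n+μ)·Γ(δ−ρn)). Then for every z ∈ ℝ one has e^{1,δ−1}_{1,ρ}(z) + (1−δ)·e^{1,δ}_{1,ρ}(z) = −ρ·z·e^{1,δ−ρ}_{1,ρ}(z). -/

import Mathlib

/- The Wright-type function `e^{μ,δ}_{1,ρ}(z) = Σ_{n≥0} zⁿ/(Γ(n+μ)·Γ(δ−ρn))`;
`Real.Gamma` vanishes at nonpositive integers, realizing the convention `1/Γ = 0` there. -/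
noncomputable def wrightE (ρ μ δ z : ℝ) : ℝ :=
  ∑' n : ℕ, z ^ n / (Real.Gamma ((n : ℝ) + μ) * Real.Gamma (δ - ρ * n))

/-!
Expanding `1 / Γ(δ - 1 - ρn) = (δ - 1 - ρn) / Γ(δ - ρn)` and
`n / Γ(n + μ) = 1 / Γ(n + μ - 1) - (μ - 1) / Γ(n + μ)` in the series of `e^{μ,δ-1}` expresses it
through `e^{μ,δ}` and `e^{μ-1,δ}`, and splitting off the first term of `e^{μ-1,δ}` leaves
`z e^{μ,δ-ρ}`. For `μ = 1` that first term vanishes, because `1 / Γ(0) = 0`.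

The series converge for every `ρ < 1`: by reflection `1 / Γ(δ - ρn)` grows at most like `Γ(a + σn)`
with `σ < 1`, and log-convexity gives `Γ(x + σ) ≤ x ^ σ Γ(x)`, so that the ratio test applies.
-/

section Gamma

open Real Set

theorem inv_Gamma_sub_one (s : ℝ) : (Gamma (s - 1))⁻¹ = (s - 1) * (Gamma s)⁻¹ := by
  rcases eq_or_ne (s - 1) 0 with hs | hs
  · simp [hs, Gamma_zero]
  · have h := Gamma_add_one hs
    rw [sub_add_cancel] at h
    rw [h, mul_inv, mul_inv_cancel_left₀ hs]

theorem Gamma_add_le_rpow_mul_Gamma {x σ : ℝ} (hx : 0 < x) (hσ₀ : 0 < σ) (hσ₁ : σ < 1) :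
    Gamma (x + σ) ≤ x ^ σ * Gamma x := by
  have hΓ : 0 < Gamma x := Gamma_pos_of_pos hx
  calc
    Gamma (x + σ) = Gamma ((1 - σ) * x + σ * (x + 1)) := by ring_nf
    _ ≤ Gamma x ^ (1 - σ) * Gamma (x + 1) ^ σ :=
      Gamma_mul_add_mul_le_rpow_Gamma_mul_rpow_Gamma hx (by linarith) (sub_pos.2 hσ₁) hσ₀ (by ring)
    _ = x ^ σ * (Gamma x ^ (1 - σ) * Gamma x ^ σ) := by
      rw [Gamma_add_one hx.ne', mul_rpow hx.le hΓ.le]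
      ring
    _ = x ^ σ * Gamma x := by rw [← rpow_add hΓ, sub_add_cancel, rpow_one]

theorem one_le_Gamma {x : ℝ} (hx : 2 ≤ x) : 1 ≤ Gamma x :=
  Gamma_two ▸ Gamma_strictMonoOn_Ici.monotoneOn self_mem_Ici hx hx

theorem one_half_le_Gamma {x : ℝ} (hx : 0 < x) : 1 / 2 ≤ Gamma x := by
  obtain ⟨x₀, ⟨h₁, h₂⟩, hmin⟩ := exists_isMinOn_Gamma_Ioi
  have hx₀ : 1 ≤ x₀ * Gamma x₀ :=
    Gamma_add_one (by linarith : x₀ ≠ 0) ▸ one_le_Gamma (by linarith)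
  have hle : Gamma x₀ ≤ Gamma x := hmin hx
  nlinarith

theorem inv_Gamma_eq_sin_mul_Gamma_one_sub {s : ℝ} (hs : s < 1) :
    (Gamma s)⁻¹ = sin (π * s) / π * Gamma (1 - s) := by
  have hΓ : Gamma (1 - s) ≠ 0 := (Gamma_pos_of_pos (sub_pos.2 hs)).ne'
  rw [← div_eq_iff hΓ, div_eq_mul_inv, ← mul_inv, Gamma_mul_Gamma_one_sub, inv_div]

theorem abs_inv_Gamma_le_Gamma_one_sub {s : ℝ} (hs : s < 1) : |(Gamma s)⁻¹| ≤ Gamma (1 - s) := by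
  have hΓ : 0 < Gamma (1 - s) := Gamma_pos_of_pos (sub_pos.2 hs)
  have hsin : |sin (π * s) / π| ≤ 1 := by
    rw [abs_div, abs_of_pos pi_pos, div_le_one pi_pos]
    linarith [abs_sin_le_one (π * s), pi_gt_three]
  rw [inv_Gamma_eq_sin_mul_Gamma_one_sub hs, abs_mul, abs_of_pos hΓ]
  exact mul_le_of_le_one_left hΓ.le hsin

theorem abs_inv_Gamma_le_two_mul_Gamma {s x : ℝ} (hx : 2 ≤ x) (hsx : 2 - s ≤ x) :
    |(Gamma s)⁻¹| ≤ 2 * Gamma x := by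
  have hΓx : 1 ≤ Gamma x := one_le_Gamma hx
  rcases le_or_gt s 0 with hs | hs
  · have hΓ : 0 < Gamma (1 - s) := Gamma_pos_of_pos (by linarith)
    calc
      |(Gamma s)⁻¹| ≤ Gamma (1 - s) := abs_inv_Gamma_le_Gamma_one_sub (by linarith)
      _ ≤ (1 - s) * Gamma (1 - s) := le_mul_of_one_le_left hΓ.le (by linarith)
      _ = Gamma (2 - s) := by
        rw [← Gamma_add_one (by linarith)]
        ring_nf
      _ ≤ Gamma x := Gamma_strictMonoOn_Ici.monotoneOn (mem_Ici.2 (by linarith)) hx hsx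
      _ ≤ 2 * Gamma x := by linarith
  · have hΓ : 0 < Gamma s := Gamma_pos_of_pos hs
    calc
      |(Gamma s)⁻¹| = (Gamma s)⁻¹ := abs_of_pos (inv_pos.2 hΓ)
      _ ≤ 2 := inv_le_of_inv_le₀ two_pos (by simpa using one_half_le_Gamma hs)
      _ ≤ 2 * Gamma x := by linarith

end Gamma

section Convergence

open Filter

theorem tendsto_add_mul_natCast_atTop (a : ℝ) {σ : ℝ} (hσ : 0 < σ) :
    Tendsto (fun n : ℕ ↦ a + σ * n) atTop atTop :=
  tendsto_atTop_add_const_left _ a (tendsto_natCast_atTop_atTop.const_mul_atTop hσ)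

theorem eventually_mul_rpow_le_mul_add (a μ c : ℝ) {σ ε : ℝ} (hσ₀ : 0 < σ) (hσ₁ : σ < 1)
    (hε : 0 < ε) : ∀ᶠ n : ℕ in atTop, c * (a + σ * n) ^ σ ≤ ε * (n + μ) := by
  have hx := tendsto_add_mul_natCast_atTop a hσ₀
  have hsmall : Tendsto (fun n : ℕ ↦ c * (a + σ * n) ^ (-(1 - σ))) atTop (nhds 0) := by
    simpa using ((tendsto_rpow_neg_atTop (sub_pos.2 hσ₁)).comp hx).const_mul c
  filter_upwards [hx.eventually_gt_atTop 0, hsmall.eventually_le_const hε,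
    (tendsto_add_mul_natCast_atTop (μ - a) (sub_pos.2 hσ₁)).eventually_ge_atTop 0]
    with n hpos hle hlin
  calc
    c * (a + σ * n) ^ σ = c * (a + σ * n) ^ (-(1 - σ)) * (a + σ * n) := by
      rw [mul_assoc, ← Real.rpow_add_one hpos.ne']
      ring_nf
    _ ≤ ε * (a + σ * n) := by gcongr
    _ ≤ ε * (n + μ) := mul_le_mul_of_nonneg_left (by linarith) hε.le

theorem summable_pow_mul_Gamma_div_Gamma (a μ z : ℝ) {σ : ℝ} (hσ₀ : 0 < σ) (hσ₁ : σ < 1) :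
    Summable fun n : ℕ ↦ z ^ n * Real.Gamma (a + σ * n) / Real.Gamma (n + μ) := by
  refine summable_of_ratio_norm_eventually_le (r := 1 / 2) (by norm_num) ?_
  filter_upwards [(tendsto_add_mul_natCast_atTop a hσ₀).eventually_gt_atTop 0,
    (tendsto_atTop_add_const_right _ μ tendsto_natCast_atTop_atTop).eventually_gt_atTop 0,
    eventually_mul_rpow_le_mul_add a μ |z| hσ₀ hσ₁ one_half_pos] with n hx hy hratio
  set x := a + σ * n
  set y := (n : ℝ) + μ
  have hxsucc : a + σ * (n + 1 : ℕ) = x + σ := by push_cast; ring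
  have hysucc : ((n + 1 : ℕ) : ℝ) + μ = y + 1 := by push_cast; ring
  have hΓx : 0 < Real.Gamma x := Real.Gamma_pos_of_pos hx
  have hΓy : 0 < Real.Gamma y := Real.Gamma_pos_of_pos hy
  have hΓxσ : 0 < Real.Gamma (x + σ) := Real.Gamma_pos_of_pos (by linarith)
  rw [hxsucc, hysucc, Real.Gamma_add_one hy.ne']
  simp only [norm_div, norm_mul, norm_pow, Real.norm_eq_abs, abs_of_pos hy, abs_of_pos hΓx,
    abs_of_pos hΓy, abs_of_pos hΓxσ]
  calc
    |z| ^ (n + 1) * Real.Gamma (x + σ) / (y * Real.Gamma y)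
        ≤ |z| ^ (n + 1) * (x ^ σ * Real.Gamma x) / (y * Real.Gamma y) := by
      gcongr
      exact Gamma_add_le_rpow_mul_Gamma hx hσ₀ hσ₁
    _ = |z| * x ^ σ * (|z| ^ n * Real.Gamma x) / (y * Real.Gamma y) := by ring
    _ ≤ 1 / 2 * y * (|z| ^ n * Real.Gamma x) / (y * Real.Gamma y) := by gcongr
    _ = 1 / 2 * (|z| ^ n * Real.Gamma x / Real.Gamma y) := by field_simp

theorem hasSum_wrightE {ρ : ℝ} (hρ : ρ < 1) (μ δ z : ℝ) :
    HasSum (fun n : ℕ ↦ z ^ n / (Real.Gamma (n + μ) * Real.Gamma (δ - ρ * n)))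
      (wrightE ρ μ δ z) := by
  obtain ⟨σ, hσ, hσ₁⟩ := exists_between (max_lt hρ one_pos)
  obtain ⟨hρσ, hσ₀⟩ := max_lt_iff.1 hσ
  have hmajorant := ((summable_pow_mul_Gamma_div_Gamma (2 + |δ|) μ z hσ₀ hσ₁).norm).mul_left 2
  refine (hmajorant.of_norm_bounded fun n ↦ ?_).hasSum
  have hρn : ρ * n ≤ σ * n := by gcongr
  have hσn : 0 ≤ σ * n := by positivity
  have hx : 2 ≤ 2 + |δ| + σ * n := by linarith [abs_nonneg δ]
  have hΓ : |(Real.Gamma (δ - ρ * n))⁻¹| ≤ 2 * |Real.Gamma (2 + |δ| + σ * n)| :=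
    (abs_inv_Gamma_le_two_mul_Gamma hx (by linarith [neg_abs_le δ])).trans
      (by gcongr; exact le_abs_self _)
  simp only [div_eq_mul_inv, mul_inv, norm_mul, Real.norm_eq_abs]
  calc
    |z ^ n| * (|(Real.Gamma (n + μ))⁻¹| * |(Real.Gamma (δ - ρ * n))⁻¹|)
        ≤ |z ^ n| * (|(Real.Gamma (n + μ))⁻¹| * (2 * |Real.Gamma (2 + |δ| + σ * n)|)) := by
      gcongr
    _ = 2 * (|z ^ n| * |Real.Gamma (2 + |δ| + σ * n)| * |(Real.Gamma (n + μ))⁻¹|) := by ring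

end Convergence

theorem wrightE_eq_add_mul_wrightE_add_one {ρ : ℝ} (hρ : ρ < 1) (μ δ z : ℝ) :
    wrightE ρ μ δ z =
      (Real.Gamma μ * Real.Gamma δ)⁻¹ + z * wrightE ρ (μ + 1) (δ - ρ) z := by
  rw [wrightE, (hasSum_wrightE hρ μ δ z).summable.tsum_eq_zero_add, wrightE, ← tsum_mul_left]
  congr 1
  · simp
  · refine tsum_congr fun n ↦ ?_
    rw [show ((n + 1 : ℕ) : ℝ) + μ = n + (μ + 1) by push_cast; ring,
      show δ - ρ * (n + 1 : ℕ) = δ - ρ - ρ * n by push_cast; ring, pow_succ', mul_div_assoc]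

theorem wrightE_sub_one {ρ : ℝ} (hρ : ρ < 1) (μ δ z : ℝ) :
    wrightE ρ μ (δ - 1) z =
      (δ - 1 + ρ * (μ - 1)) * wrightE ρ μ δ z - ρ * wrightE ρ (μ - 1) δ z := by
  have hsum := ((hasSum_wrightE hρ μ δ z).mul_left (δ - 1 + ρ * (μ - 1))).sub
    ((hasSum_wrightE hρ (μ - 1) δ z).mul_left ρ)
  refine (hasSum_wrightE hρ μ (δ - 1) z).unique (hsum.congr_fun fun n ↦ ?_)
  have hμ : (Real.Gamma (n + (μ - 1)))⁻¹ = (n + μ - 1) * (Real.Gamma (n + μ))⁻¹ := by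
    rw [← add_sub_assoc, inv_Gamma_sub_one]
  have hδ : (Real.Gamma (δ - 1 - ρ * n))⁻¹ = (δ - ρ * n - 1) * (Real.Gamma (δ - ρ * n))⁻¹ := by
    rw [sub_right_comm, inv_Gamma_sub_one]
  simp only [div_eq_mul_inv, mul_inv, hμ, hδ]
  ring

theorem wright_recurrence_general {ρ : ℝ} (hρ : ρ < 1) (μ δ z : ℝ) :
    wrightE ρ μ (δ - 1) z + (1 - δ) * wrightE ρ μ δ z =
      ρ * ((μ - 1) * wrightE ρ μ δ z - (Real.Gamma (μ - 1) * Real.Gamma δ)⁻¹ -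
        z * wrightE ρ μ (δ - ρ) z) := by
  rw [wrightE_sub_one hρ, wrightE_eq_add_mul_wrightE_add_one hρ (μ - 1), sub_add_cancel]
  ring

/- STATEMENT 9: the recurrence
`e^{1,δ−1}_{1,ρ}(z) + (1−δ)·e^{1,δ}_{1,ρ}(z) = −ρ·z·e^{1,δ−ρ}_{1,ρ}(z)`. -/
theorem wright_recurrence (δ ρ : ℝ) (hρ0 : 0 < ρ) (hρ1 : ρ < 1) (z : ℝ) :
    wrightE ρ 1 (δ - 1) z + (1 - δ) * wrightE ρ 1 δ z =
      -(ρ * z * wrightE ρ 1 (δ - ρ) z) := by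
  simpa [Real.Gamma_zero, mul_assoc] using wright_recurrence_general hρ1 1 δ z
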